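/- There exists a constant C > 0, depending only on n, such that for every λ > 0, every smooth ℤⁿ-periodic φ : ℝⁿ → ℝ with Δφ = −λ²φ and ∫_Q φ(x)² dx = 1, and every c > 0: μH^{n−1}(N_φ^c) + μH^{n−1}(N_φ^{−c}) ≥ C λ^{(3−n)/2} ∫_{{x ∈ Q : |φ(x)| ≥ c}} |φ(x)| dx. -/

import Mathlib

/-!
The bound follows by testing the equation `Δφ = -λ²φ` with a cutoff of the indicator of `{φ > c}`,
the cutoff taking place near a covering of the level set which is nearly optimal for the Hausdorff
measure. No regularity of the level set is needed.

Let `A > μH^{n-1}({φ = c} ∩ Q)` and `δ > 0`. The level set in `Q` is covered by balls with centres in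
`Q` and radii `rᵢ ≤ δ` with `∑ rᵢⁿ⁻¹ ≤ A` (`exists_cover`); by compactness, finitely many of their
slightly fattened periodic versions suffice. Let `ηᵢ` be a smooth periodic function vanishing near
the `i`-th ball, equal to `1` away from a comparable ball, with `|∇ηᵢ| ≲ 1/rᵢ` (`eta`), and let `η` be
the product of the `ηᵢ`. As `η` vanishes near `{φ = c}`, the function `η 1_{φ > c}` is `C¹` and
periodic. Integrating by parts over `Q` (`integral_parts`),
`λ² ∫ η 1_{φ > c} φ = ∫ ∇(η 1_{φ > c}) · ∇φ ≲ sup |∇φ| ∑ rᵢⁿ⁻¹ ≤ sup |∇φ| A`,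
while replacing `η` by `1` on the left costs `O(∑ rᵢⁿ) = O(δ A)` (`core_bound`). With `δ → 0` and
`A → μH^{n-1}({φ = c} ∩ Q)` this gives `λ² ∫_{φ ≥ c} φ ≲ sup |∇φ| μH^{n-1}({φ = c} ∩ Q)`
(`one_sided`). The same inequality for `-φ` takes care of the level `-c`.

It remains to see that `sup |∇φ| ≲ λ^{(n+1)/2}` (`grad_bound`). The Fourier coefficients of `φ` are
supported on the lattice points of the sphere of radius `λ/2π` (`coeff_eq_zero`), of which there are
at most `2λⁿ⁻¹` (`sphere_card`), so Cauchy–Schwarz and Parseval give `|∂ᵢφ|² ≤ λ² · 2λⁿ⁻¹`.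
-/

open MeasureTheory Real Set

noncomputable section

/-- The Euclidean Laplacian `Δφ = Σᵢ ∂²φ/∂xᵢ²`. -/
def lap {n : ℕ} (φ : EuclideanSpace ℝ (Fin n) → ℝ) (x : EuclideanSpace ℝ (Fin n)) : ℝ :=
  ∑ i : Fin n,
    fderiv ℝ (fun y => fderiv ℝ φ y (EuclideanSpace.single i 1)) x (EuclideanSpace.single i 1)

/-- `ℤⁿ`-periodicity of a function on `ℝⁿ`. -/
def ZPeriodic {n : ℕ} (φ : EuclideanSpace ℝ (Fin n) → ℝ) : Prop :=
  ∀ (x : EuclideanSpace ℝ (Fin n)) (k : Fin n → ℤ),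
    φ (x + (WithLp.equiv 2 (Fin n → ℝ)).symm fun i => (k i : ℝ)) = φ x

/-- The fundamental domain `Q = [0,1)ⁿ`. -/
def Qcube (n : ℕ) : Set (EuclideanSpace ℝ (Fin n)) :=
  {x | ∀ i, x i ∈ Set.Ico (0 : ℝ) 1}

/-! ### Periodic functions and integration by parts on the cube -/

/-- The ambient Euclidean space `ℝⁿ`. -/
abbrev Eu (n : ℕ) := EuclideanSpace ℝ (Fin n)

/-- `ℤⁿ`-periodicity of a function with values in an arbitrary type. -/
def Per {n : ℕ} {G : Type*} (F : Eu n → G) : Prop :=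
  ∀ (x : Eu n) (k : Fin n → ℤ), F (x + WithLp.toLp 2 fun i => (k i : ℝ)) = F x

/-- The `i`-th standard basis vector of `ℝⁿ`. -/
abbrev bv {n : ℕ} (i : Fin n) : Eu n := EuclideanSpace.single i 1

/-- The closed unit cube. It is compact, and differs from `Qcube n` by a null set. -/
def Ccube (n : ℕ) : Set (Eu n) := {x | ∀ i, x i ∈ Set.Icc (0 : ℝ) 1}

lemma Ccube_eq (n : ℕ) : Ccube n = WithLp.toLp 2 '' (Icc (0 : Fin n → ℝ) 1) := by
  ext x
  constructor
  · intro h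
    exact ⟨WithLp.ofLp x, ⟨fun i => (h i).1, fun i => (h i).2⟩, rfl⟩
  · rintro ⟨y, hy, rfl⟩ i
    exact ⟨hy.1 i, hy.2 i⟩

lemma isCompact_Ccube (n : ℕ) : IsCompact (Ccube n) := by
  rw [Ccube_eq]
  exact isCompact_Icc.image (PiLp.continuous_toLp 2 _)

lemma Qcube_subset (n : ℕ) : Qcube n ⊆ Ccube n := fun _ hx i => ⟨(hx i).1, (hx i).2.le⟩

lemma measurableSet_Qcube (n : ℕ) : MeasurableSet (Qcube n) := by
  have : Qcube n = ⋂ i : Fin n, (fun x : Eu n => x i) ⁻¹' Ico (0:ℝ) 1 := by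
    ext x; simp [Qcube]
  rw [this]
  exact MeasurableSet.iInter fun i => (by fun_prop : Measurable fun x : Eu n => x i) measurableSet_Ico

lemma toLp_preimage_Qcube (n : ℕ) :
    WithLp.toLp 2 ⁻¹' (Qcube n) = Set.univ.pi fun _ : Fin n => Ico (0:ℝ) 1 := by
  ext x; simp [Qcube]

lemma setIntegral_toLp {n : ℕ} {G : Type*} [NormedAddCommGroup G] [NormedSpace ℝ G]
    (f : Eu n → G) (s : Set (Eu n)) :
    ∫ x in s, f x = ∫ y in WithLp.toLp 2 ⁻¹' s, f (WithLp.toLp 2 y) :=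
  ((PiLp.volume_preserving_toLp (Fin n)).setIntegral_preimage_emb
    (MeasurableEquiv.toLp 2 (Fin n → ℝ)).measurableEmbedding f s).symm

lemma integral_Qcube_eq {n : ℕ} {G : Type*} [NormedAddCommGroup G] [NormedSpace ℝ G]
    (f : Eu n → G) :
    ∫ x in Qcube n, f x = ∫ y in Icc (0 : Fin n → ℝ) 1, f (WithLp.toLp 2 y) := by
  rw [setIntegral_toLp, toLp_preimage_Qcube]
  exact setIntegral_congr_set (Measure.univ_pi_Ico_ae_eq_Icc (f := 0) (g := 1))

lemma integrableOn_Qcube {n : ℕ} {G : Type*} [NormedAddCommGroup G]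
    {f : Eu n → G} (hf : Continuous f) : IntegrableOn f (Qcube n) :=
  (hf.continuousOn.integrableOn_compact (isCompact_Ccube n)).mono_set (Qcube_subset n)

/-- A partial derivative of a periodic function has mean zero over the fundamental domain: by the
divergence theorem on the cube only the contributions of two opposite faces remain, and they
cancel. -/
lemma integral_partial_eq_zero {n : ℕ} {G : Type*} [NormedAddCommGroup G] [NormedSpace ℝ G]
    [CompleteSpace G] {F : Eu n → G} (hF : ContDiff ℝ 1 F) (hper : Per F) (i : Fin n) :
    ∫ x in Qcube n, fderiv ℝ F x (bv i) = 0 := by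
  rw [integral_Qcube_eq]
  obtain _ | m := n
  · exact i.elim0
  let L : (Fin (m+1) → ℝ) →L[ℝ] Eu (m+1) := (EuclideanSpace.equiv (Fin (m+1)) ℝ).symm
  have hL : ∀ y, L y = WithLp.toLp 2 y := fun y => rfl
  have hLs : L (Pi.single i 1) = bv i := rfl
  let f : Fin (m+1) → (Fin (m+1) → ℝ) → G := fun j y => if j = i then F (L y) else 0
  let f' : Fin (m+1) → (Fin (m+1) → ℝ) → (Fin (m+1) → ℝ) →L[ℝ] G :=
    fun j y => if j = i then (fderiv ℝ F (L y)).comp L else 0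
  have hsum : ∀ y, ∑ j, f' j y (Pi.single j 1) = fderiv ℝ F (L y) (bv i) := by
    intro y
    rw [Finset.sum_eq_single i]
    · simp only [f', if_true, ContinuousLinearMap.comp_apply, hLs]
    · intro j _ hj; simp [f', hj]
    · simp
  have hcont : Continuous fun y => fderiv ℝ F (L y) (bv i) :=
    ((hF.continuous_fderiv (by norm_num)).comp L.continuous).clm_apply continuous_const
  have key := integral_divergence_of_hasFDerivAt_off_countable' (0 : Fin (m+1) → ℝ) 1
    (fun _ => zero_le_one) f f' ∅ countable_empty ?_ ?_ ?_
  · simp only [hsum] at key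
    rw [show (fun y => fderiv ℝ F (WithLp.toLp 2 y) (bv i)) =
      fun y => fderiv ℝ F (L y) (bv i) from rfl, key]
    refine Finset.sum_eq_zero fun j _ => ?_
    by_cases hj : j = i
    · subst hj
      simp only [f, if_true]
      rw [sub_eq_zero]
      congr 1
      ext y
      have := hper (L (Fin.insertNth j 0 y)) (Pi.single j 1)
      simp only [Pi.zero_apply, Pi.one_apply]
      rw [← this]
      congr 1
      ext a
      rw [hL, hL]
      refine Fin.succAboveCases j ?_ (fun b => ?_) a <;> simp
    · simp [f, hj]
  · intro j
    by_cases hj : j = i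
    · simp only [f, hj, if_true]
      exact (hF.continuous.comp L.continuous).continuousOn
    · simp only [f, hj, if_false]; exact continuousOn_const
  · intro y _ j
    by_cases hj : j = i
    · simp only [f, f', hj, if_true]
      exact ((hF.differentiable (by norm_num)) (L y)).hasFDerivAt.comp y L.hasFDerivAt
    · simp only [f, f', hj, if_false]; exact hasFDerivAt_const _ _
  · simp only [hsum]
    exact hcont.continuousOn.integrableOn_compact isCompact_Icc

lemma integral_parts {n : ℕ} {R : Type*} [NormedRing R] [NormedAlgebra ℝ R]
    [CompleteSpace R]
    {f g : Eu n → R} (hf : ContDiff ℝ 1 f) (hg : ContDiff ℝ 1 g) (pf : Per f) (pg : Per g)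
    (i : Fin n) :
    ∫ x in Qcube n, f x * fderiv ℝ g x (bv i) = - ∫ x in Qcube n, fderiv ℝ f x (bv i) * g x := by
  have h := integral_partial_eq_zero (hf.mul hg) (fun x k => by simp only [pf x k, pg x k]) i
  have hd : ∀ x, fderiv ℝ (fun x => f x * g x) x (bv i) =
      f x * fderiv ℝ g x (bv i) + fderiv ℝ f x (bv i) * g x := by
    intro x
    rw [fderiv_fun_mul' (hf.differentiable (by norm_num) x) (hg.differentiable (by norm_num) x)]
    simp
  have cf : Continuous fun x => fderiv ℝ f x (bv i) :=
    (hf.continuous_fderiv (by norm_num)).clm_apply continuous_const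
  have cg : Continuous fun x => fderiv ℝ g x (bv i) :=
    (hg.continuous_fderiv (by norm_num)).clm_apply continuous_const
  simp only [hd] at h
  have i1 : IntegrableOn (fun x => f x * fderiv ℝ g x (bv i)) (Qcube n) :=
    integrableOn_Qcube (hf.continuous.mul cg)
  have i2 : IntegrableOn (fun x => fderiv ℝ f x (bv i) * g x) (Qcube n) :=
    integrableOn_Qcube (cf.mul hg.continuous)
  rw [integral_add i1 i2] at h
  exact eq_neg_of_add_eq_zero_left h

lemma per_fderiv {n : ℕ} {G : Type*} [NormedAddCommGroup G] [NormedSpace ℝ G]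
    {F : Eu n → G} (h : Per F) (v : Eu n) : Per fun x => fderiv ℝ F x v := by
  intro x k
  have : (fun y => F (y + WithLp.toLp 2 fun i => (k i : ℝ))) = F := funext fun y => h y k
  conv_rhs => rw [← this]
  simp only [fderiv_comp_add_right]

/-! ### Fourier expansion of eigenfunctions -/

/-- The Fourier character `x ↦ exp(2πi k·x)` on `ℝⁿ`. -/
def ek {n : ℕ} (k : Fin n → ℤ) (x : Eu n) : ℂ :=
  Complex.exp (2 * π * Complex.I * ((∑ j, (k j : ℝ) * x j : ℝ) : ℂ))

lemma norm_ek {n : ℕ} (k : Fin n → ℤ) (x : Eu n) : ‖ek k x‖ = 1 := by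
  rw [ek, show (2 * π * Complex.I * ((∑ j, (k j : ℝ) * x j : ℝ) : ℂ)) =
    ((2 * π * (∑ j, (k j : ℝ) * x j) : ℝ) : ℂ) * Complex.I by push_cast; ring]
  exact Complex.norm_exp_ofReal_mul_I _

lemma per_ek {n : ℕ} (k : Fin n → ℤ) : Per (ek k) := by
  intro x m
  have : (2 * π * Complex.I * ((∑ j, (k j : ℝ) * (x + WithLp.toLp 2 fun i => (m i : ℝ)) j : ℝ) : ℂ))
      = (2 * π * Complex.I * ((∑ j, (k j : ℝ) * x j : ℝ) : ℂ)) +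
        ((∑ j, k j * m j : ℤ) : ℂ) * (2 * π * Complex.I) := by
    simp only [PiLp.add_apply, mul_add, Finset.sum_add_distrib]
    push_cast
    ring
  rw [ek, this, Complex.exp_add, Complex.exp_int_mul_two_pi_mul_I, mul_one]
  rfl

lemma contDiff_ek {n : ℕ} (k : Fin n → ℤ) : ContDiff ℝ 1 (ek k) := by
  have h1 : ContDiff ℝ 1 fun x : Eu n => (∑ j, (k j : ℝ) * x j : ℝ) := by fun_prop
  have h2 : ContDiff ℝ 1 fun x : Eu n => (((∑ j, (k j : ℝ) * x j : ℝ)) : ℂ) :=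
    Complex.ofRealCLM.contDiff.comp h1
  exact (contDiff_const.mul h2).cexp

lemma fderiv_ek {n : ℕ} (k : Fin n → ℤ) (x : Eu n) (i : Fin n) :
    fderiv ℝ (ek k) x (bv i) = 2 * π * Complex.I * k i * ek k x := by
  have hd := ((contDiff_ek k).differentiable (by norm_num) x).hasFDerivAt
  have hline : HasDerivAt (fun t : ℝ => x + t • bv i) (bv i) 0 := by
    simpa using ((hasDerivAt_id (0:ℝ)).smul_const (bv i)).const_add x
  have h1 : HasDerivAt (fun t : ℝ => ek k (x + t • bv i)) (fderiv ℝ (ek k) x (bv i)) 0 := by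
    have hd' : HasFDerivAt (ek k) (fderiv ℝ (ek k) x) (x + (0:ℝ) • bv i) := by simpa using hd
    exact hd'.comp_hasDerivAt (0:ℝ) hline
  have h2 : (fun t : ℝ => ek k (x + t • bv i)) =
      fun t : ℝ => ek k x * Complex.exp ((t : ℂ) * (2 * π * Complex.I * k i)) := by
    ext t
    rw [ek, ek, ← Complex.exp_add]
    congr 1
    have : ∑ j, (k j : ℝ) * (x + t • bv i) j = (∑ j, (k j : ℝ) * x j) + t * k i := by
      simp only [PiLp.add_apply, mul_add, Finset.sum_add_distrib]
      congr 1
      rw [Finset.sum_eq_single i]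
      · simp; ring
      · intro j _ hj; simp [hj]
      · simp
    rw [this]; push_cast; ring
  have h3 : HasDerivAt (fun t : ℝ => ek k x * Complex.exp ((t : ℂ) * (2 * π * Complex.I * k i)))
      (ek k x * (Complex.exp (((0:ℝ) : ℂ) * (2 * π * Complex.I * k i)) *
        (1 * (2 * π * Complex.I * k i)))) 0 :=
    (((hasDerivAt_id (0:ℝ)).ofReal_comp.mul_const _).cexp).const_mul _
  rw [h2] at h1
  rw [h1.unique h3]
  simp; ring

lemma integral_ek_partial {n : ℕ} (k : Fin n → ℤ) {ψ : Eu n → ℝ} (hψ : ContDiff ℝ 1 ψ)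
    (pψ : Per ψ) (i : Fin n) :
    ∫ x in Qcube n, ek k x * (fderiv ℝ ψ x (bv i) : ℝ) =
      -(2 * π * Complex.I * k i) * ∫ x in Qcube n, ek k x * (ψ x : ℝ) := by
  have hC : ContDiff ℝ 1 fun x => (ψ x : ℂ) := Complex.ofRealCLM.contDiff.comp hψ
  have h := integral_parts (contDiff_ek k) hC (per_ek k) (fun x m => by simp only [pψ x m]) i
  have hd : ∀ x, fderiv ℝ (fun x => (ψ x : ℂ)) x (bv i) = (fderiv ℝ ψ x (bv i) : ℝ) := by
    intro x
    have := (Complex.ofRealCLM.hasFDerivAt.comp x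
      ((hψ.differentiable (by norm_num) x).hasFDerivAt)).fderiv
    rw [show (fun x => (ψ x : ℂ)) = Complex.ofRealCLM ∘ ψ from rfl, this]
    rfl
  simp only [hd, fderiv_ek] at h
  rw [h, neg_mul, ← integral_const_mul]
  congr 2
  ext x; ring

/-- The Fourier coefficients of an eigenfunction are supported on the sphere `4π²|k|² = λ²`. -/
lemma coeff_eq_zero {n : ℕ} {lam : ℝ} {φ : Eu n → ℝ} (hφ : ContDiff ℝ (⊤ : ℕ∞) φ) (pφ : Per φ)
    (hlap : ∀ x, lap φ x = -lam ^ 2 * φ x) (k : Fin n → ℤ)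
    (hk : 4 * π ^ 2 * ∑ i, (k i : ℝ) ^ 2 ≠ lam ^ 2) :
    ∫ x in Qcube n, ek k x * (φ x : ℝ) = 0 := by
  have h1 : ContDiff ℝ 1 φ := hφ.of_le (by exact_mod_cast le_top)
  have hd : ∀ i, ContDiff ℝ 1 fun x => fderiv ℝ φ x (bv i) := fun i =>
    (hφ.fderiv_right (m := 1)
      (by rw [one_add_one_eq_two]; exact WithTop.coe_le_coe.2 le_top)).clm_apply contDiff_const
  set A := ∫ x in Qcube n, ek k x * (φ x : ℝ) with hA
  have h2 : ∀ i, ∫ x in Qcube n, ek k x *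
      (fderiv ℝ (fun y => fderiv ℝ φ y (bv i)) x (bv i) : ℝ) = -(4 * π ^ 2 * (k i : ℝ) ^ 2 : ℝ) * A := by
    intro i
    rw [integral_ek_partial k (hd i) (per_fderiv pφ _) i, integral_ek_partial k h1 pφ i, ← hA]
    push_cast
    linear_combination (4 * π ^ 2 * (k i : ℂ) ^ 2 * A) * Complex.I_sq
  have h3 : ∑ i, ∫ x in Qcube n, ek k x *
      (fderiv ℝ (fun y => fderiv ℝ φ y (bv i)) x (bv i) : ℝ) = -(lam ^ 2 : ℝ) * A := by
    rw [← integral_finsetSum]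
    · rw [hA, ← integral_const_mul]
      congr 1
      ext x
      have := hlap x
      rw [lap] at this
      rw [← Finset.mul_sum, ← Complex.ofReal_sum, this]
      push_cast; ring
    · intro i _
      apply integrableOn_Qcube
      have : Continuous fun x => fderiv ℝ (fun y => fderiv ℝ φ y (bv i)) x (bv i) :=
        ((hd i).continuous_fderiv (by norm_num)).clm_apply continuous_const
      exact (contDiff_ek k).continuous.mul (Complex.continuous_ofReal.comp this)
  simp only [h2] at h3
  rw [← Finset.sum_mul, Finset.sum_neg_distrib, ← Complex.ofReal_sum, ← Finset.mul_sum] at h3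
  have h4 : ((4 * π ^ 2 * ∑ i, (k i : ℝ) ^ 2 - lam ^ 2 : ℝ) : ℂ) * A = 0 := by
    push_cast at h3 ⊢
    linear_combination -h3
  rcases mul_eq_zero.1 h4 with h | h
  · exact absurd (sub_eq_zero.1 (Complex.ofReal_eq_zero.1 h)) hk
  · exact h

/-- The projection `ℝⁿ → ℝⁿ/ℤⁿ`. -/
def toTorus {n : ℕ} (x : Eu n) : UnitAddTorus (Fin n) := fun i => (x i : UnitAddCircle)

lemma isOpenQuotientMap_toTorus (n : ℕ) : IsOpenQuotientMap (toTorus (n := n)) := by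
  have h1 : IsOpenQuotientMap (Pi.map fun (_ : Fin n) (t : ℝ) => (t : UnitAddCircle)) :=
    IsOpenQuotientMap.piMap fun _ => QuotientAddGroup.isOpenQuotientMap_mk
  exact h1.comp (EuclideanSpace.equiv (Fin n) ℝ).toHomeomorph.isOpenQuotientMap

lemma mFourier_toTorus {n : ℕ} (k : Fin n → ℤ) (x : Eu n) :
    UnitAddTorus.mFourier k (toTorus x) = ek k x := by
  simp only [UnitAddTorus.mFourier, ContinuousMap.coe_mk, toTorus, fourier_coe_apply, ek]
  rw [← Complex.exp_sum]
  congr 1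
  push_cast
  rw [Finset.mul_sum]
  refine Finset.sum_congr rfl fun i _ => ?_
  ring

lemma per_factor {n : ℕ} {φ : Eu n → ℝ} (pφ : Per φ) {x y : Eu n} (h : toTorus x = toTorus y) :
    φ x = φ y := by
  have : ∀ i, ∃ m : ℤ, x i = y i + m := by
    intro i
    have hi : (x i : UnitAddCircle) = (y i : UnitAddCircle) := congrFun h i
    rw [← sub_eq_zero, ← AddCircle.coe_sub, AddCircle.coe_eq_zero_iff] at hi
    obtain ⟨m, hm⟩ := hi
    exact ⟨m, by rw [zsmul_one] at hm; linarith⟩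
  choose m hm using this
  rw [← pφ y m]
  congr 1
  ext i
  simp [hm i]

/-- A continuous periodic function whose Fourier coefficients vanish off a finite set `S` is the sum
of its Fourier series. -/
lemma fourier_expansion {n : ℕ} {φ : Eu n → ℝ} (hc : Continuous φ) (pφ : Per φ)
    (S : Finset (Fin n → ℤ))
    (hS : ∀ k ∉ S, ∫ x in Qcube n, ek (-k) x * (φ x : ℝ) = 0) (x : Eu n) :
    (φ x : ℂ) = ∑ k ∈ S, (∫ x in Qcube n, ek (-k) x * (φ x : ℝ)) * ek k x := by
  have hq := isOpenQuotientMap_toTorus n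
  let f0 : UnitAddTorus (Fin n) → ℂ := fun t => φ (Function.surjInv hq.surjective t)
  have hf0 : ∀ x, f0 (toTorus x) = φ x := fun x => by
    simp only [f0]
    rw [per_factor pφ (Function.surjInv_eq hq.surjective (toTorus x))]
  let f : C(UnitAddTorus (Fin n), ℂ) := ⟨f0, by
    rw [hq.isQuotientMap.continuous_iff]
    rw [show f0 ∘ toTorus = fun x => (φ x : ℂ) from funext hf0]
    exact Complex.continuous_ofReal.comp hc⟩
  have hcoeff : ∀ k, UnitAddTorus.mFourierCoeff f k = ∫ x in Qcube n, ek (-k) x * (φ x : ℝ) := by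
    intro k
    rw [UnitAddTorus.mFourierCoeff_eq_integral f k 0, integral_Qcube_eq]
    have hset : {x : Fin n → ℝ | ∀ i, x i ∈ Ioc ((0 : Fin n → ℝ) i) ((0 : Fin n → ℝ) i + 1)} =
        Set.univ.pi fun i => Ioc ((0 : Fin n → ℝ) i) ((1 : Fin n → ℝ) i) := by
      ext x; simp
    rw [hset]
    refine (setIntegral_congr_set (Measure.univ_pi_Ioc_ae_eq_Icc (f := 0) (g := 1))).trans ?_
    congr 1
    ext y
    rw [smul_eq_mul]
    have e1 := mFourier_toTorus (-k) (WithLp.toLp 2 y)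
    have e2 := hf0 (WithLp.toLp 2 y)
    rw [← e1, ← e2]
    rfl
  have hsupp : ∀ k ∉ S, UnitAddTorus.mFourierCoeff f k = 0 := fun k hk => by
    rw [hcoeff, hS k hk]
  have hsum := UnitAddTorus.hasSum_mFourier_series_apply_of_summable
    (f := f) (summable_of_ne_finset_zero (s := S) hsupp) (toTorus x)
  have h2 := hsum.unique (hasSum_sum_of_ne_finset_zero (s := S) (fun k hk => by
    rw [hsupp k hk, zero_smul]))
  rw [← hf0 x]
  refine h2.trans (Finset.sum_congr rfl fun k _ => ?_)
  rw [hcoeff, mFourier_toTorus, smul_eq_mul]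

lemma conj_ek {n : ℕ} (k : Fin n → ℤ) (x : Eu n) :
    (starRingEnd ℂ) (ek k x) = ek (-k) x := by
  rw [ek, ek, ← Complex.exp_conj]
  congr 1
  simp only [map_mul, Complex.conj_I, Complex.conj_ofReal, Pi.neg_apply, Int.cast_neg, neg_mul,
    Finset.sum_neg_distrib, Complex.ofReal_neg, map_ofNat]
  ring

/-- Parseval's identity for a finite trigonometric sum. -/
lemma parseval {n : ℕ} {φ : Eu n → ℝ} (hc : Continuous φ) (S : Finset (Fin n → ℤ))
    (a : (Fin n → ℤ) → ℂ) (ha : ∀ k, a k = ∫ x in Qcube n, ek (-k) x * (φ x : ℝ))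
    (hexp : ∀ x, (φ x : ℂ) = ∑ k ∈ S, a k * ek k x) :
    ∑ k ∈ S, ‖a k‖ ^ 2 = ∫ x in Qcube n, φ x ^ 2 := by
  have h1 : ∀ x, ((φ x ^ 2 : ℝ) : ℂ) =
      ∑ k ∈ S, (starRingEnd ℂ) (a k) * (ek (-k) x * (φ x : ℝ)) := by
    intro x
    have h2 : (φ x : ℂ) = ∑ k ∈ S, (starRingEnd ℂ) (a k) * ek (-k) x := by
      rw [← Complex.conj_ofReal, hexp x, map_sum]
      simp only [map_mul, conj_ek]
    push_cast
    rw [sq]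
    nth_rw 1 [h2]
    rw [Finset.sum_mul]
    refine Finset.sum_congr rfl fun k _ => ?_
    ring
  have h3 : ((∫ x in Qcube n, φ x ^ 2 : ℝ) : ℂ) = ((∑ k ∈ S, ‖a k‖ ^ 2 : ℝ) : ℂ) := by
    rw [← integral_complex_ofReal]
    simp only [h1]
    rw [integral_finsetSum]
    · push_cast
      refine Finset.sum_congr rfl fun k _ => ?_
      rw [integral_const_mul, ← ha, Complex.conj_mul']
    · intro k _
      apply integrableOn_Qcube
      exact continuous_const.mul
        ((contDiff_ek (-k)).continuous.mul (Complex.continuous_ofReal.comp hc))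
  exact (Complex.ofReal_injective h3).symm

/-! ### Lattice points on spheres and the gradient bound -/

/-- There are at most `2 (2M+1)ᵐ` integer points of `[-M, M]ᵐ⁺¹` on a given sphere: all coordinates
but the first, together with the sign of the first one, determine the point. -/
lemma sphere_card (m M : ℕ) (R2 : ℝ) :
    ((Fintype.piFinset fun _ : Fin (m + 1) => Finset.Icc (-M : ℤ) M).filter
      (fun k => ∑ i, (k i : ℝ) ^ 2 = R2)).card ≤ 2 * (2 * M + 1) ^ m := by
  have hT : ((Finset.univ : Finset Bool) ×ˢ
      (Fintype.piFinset fun _ : Fin m => Finset.Icc (-M : ℤ) M)).card = 2 * (2 * M + 1) ^ m := by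
    rw [Finset.card_product, Fintype.card_piFinset]
    simp only [Int.card_Icc, Finset.prod_const, Finset.card_univ, Fintype.card_bool,
      Fintype.card_fin]
    congr 2
    omega
  rw [← hT]
  refine Finset.card_le_card_of_injOn (fun k => (decide (0 ≤ k 0), Fin.tail k)) ?_ ?_
  · intro k hk
    simp only [Finset.coe_filter, Fintype.mem_piFinset, Set.mem_ofPred_eq] at hk
    simp only [Finset.coe_product, Set.mem_prod, Finset.mem_coe, Finset.mem_univ, true_and,
      Fintype.mem_piFinset]
    exact fun i => hk.1 i.succ
  · intro k hk l hl h
    simp only [Finset.coe_filter, Set.mem_ofPred_eq] at hk hl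
    simp only [Prod.mk.injEq, decide_eq_decide] at h
    obtain ⟨h0, ht⟩ := h
    have ht' : ∀ i : Fin m, k i.succ = l i.succ := fun i => congrFun ht i
    have h1 : (k 0 : ℝ) ^ 2 = (l 0 : ℝ) ^ 2 := by
      have := hk.2.trans hl.2.symm
      rw [Fin.sum_univ_succ, Fin.sum_univ_succ] at this
      simp only [ht'] at this
      linarith
    have h2 : k 0 ^ 2 = l 0 ^ 2 := by exact_mod_cast h1
    have h3 : k 0 = l 0 := by
      rcases sq_eq_sq_iff_eq_or_eq_neg.1 h2 with h | h
      · exact h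
      · omega
    funext i
    refine Fin.cases h3 ht' i

/-- The sup norm estimate for the partial derivatives of an `L²`-normalized eigenfunction of the
torus: by Cauchy–Schwarz and Parseval, `|∂ᵢφ| ≤ λ ∑ |aₖ| ≤ λ √#S`, where `S`, the set of
frequencies, consists of at most `2λⁿ⁻¹` lattice points. -/
lemma grad_bound {n : ℕ} (hn : 1 ≤ n) {lam : ℝ} (hlam : 0 < lam) {φ : Eu n → ℝ}
    (hφ : ContDiff ℝ (⊤ : ℕ∞) φ) (pφ : Per φ)
    (hlap : ∀ x, lap φ x = -lam ^ 2 * φ x) (hnorm : ∫ x in Qcube n, φ x ^ 2 = 1)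
    (x : Eu n) (i : Fin n) :
    |fderiv ℝ φ x (bv i)| ≤ √(2 * lam ^ (n + 1)) := by
  obtain ⟨m, rfl⟩ : ∃ m, n = m + 1 := ⟨n - 1, by omega⟩
  have h1 : ContDiff ℝ 1 φ := hφ.of_le (by exact_mod_cast le_top)
  set R := lam / (2 * π) with hR
  have hRpos : 0 < R := by positivity
  have hlamR : lam = 2 * π * R := by rw [hR]; field_simp
  set M := ⌊R⌋₊ with hM
  set S := (Fintype.piFinset fun _ : Fin (m + 1) => Finset.Icc (-M : ℤ) M).filter
      (fun k => ∑ i, (k i : ℝ) ^ 2 = R ^ 2) with hS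
  have hsph : ∀ k : Fin (m+1) → ℤ, ∑ i, (k i : ℝ) ^ 2 = R ^ 2 → k ∈ S := by
    intro k hk
    rw [hS, Finset.mem_filter, Fintype.mem_piFinset]
    refine ⟨fun j => ?_, hk⟩
    have hj : (k j : ℝ) ^ 2 ≤ R ^ 2 := by
      rw [← hk]
      exact Finset.single_le_sum (f := fun i => (k i : ℝ) ^ 2) (fun i _ => sq_nonneg _)
        (Finset.mem_univ j)
    have habs : |(k j : ℝ)| ≤ R := abs_le_of_sq_le_sq hj hRpos.le
    have hnat : (k j).natAbs ≤ M := Nat.le_floor (by rw [Nat.cast_natAbs, Int.cast_abs]; exact habs)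
    rw [Finset.mem_Icc]
    omega
  set a : (Fin (m+1) → ℤ) → ℂ := fun k => ∫ x in Qcube (m+1), ek (-k) x * (φ x : ℝ) with ha
  have hexp : ∀ x, (φ x : ℂ) = ∑ k ∈ S, a k * ek k x := by
    intro x
    refine fourier_expansion h1.continuous pφ S (fun k hk => ?_) x
    refine coeff_eq_zero hφ pφ hlap (-k) fun h => hk (hsph k ?_)
    simp only [Pi.neg_apply, Int.cast_neg, neg_sq] at h
    rw [hlamR, mul_pow, mul_pow] at h
    have : (4 * π ^ 2) ≠ 0 := by positivity
    apply mul_left_cancel₀ this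
    linarith
  have hpars := parseval h1.continuous S a (fun k => rfl) hexp
  rw [hnorm] at hpars
  have hR1 : 1 ≤ R := by
    obtain ⟨k, hk⟩ : S.Nonempty := by
      rw [Finset.nonempty_iff_ne_empty]
      intro h
      rw [h] at hpars
      simp at hpars
    have hk2 := (Finset.mem_filter.1 hk).2
    have hposZ : (0:ℤ) < ∑ i, k i ^ 2 := by
      have : (0:ℝ) < ∑ i, (k i : ℝ) ^ 2 := by rw [hk2]; positivity
      exact_mod_cast this
    have : (1:ℝ) ≤ ∑ i, (k i : ℝ) ^ 2 := by exact_mod_cast hposZ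
    rw [hk2] at this
    nlinarith
  -- `2M + 1 ≤ 3R ≤ 2πR = λ`
  have hcard : (S.card : ℝ) ≤ 2 * lam ^ m := by
    have h2 : (S.card : ℝ) ≤ 2 * (2 * M + 1) ^ m := by
      have := sphere_card m M (R ^ 2)
      rw [← hS] at this
      exact_mod_cast this
    have h3 : (M : ℝ) ≤ R := Nat.floor_le hRpos.le
    have h4 : 2 * (M : ℝ) + 1 ≤ lam := by
      rw [hlamR]
      nlinarith [Real.pi_gt_three]
    exact h2.trans (by gcongr)
  have hderiv : ((fderiv ℝ φ x (bv i) : ℝ) : ℂ) =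
      ∑ k ∈ S, a k * (2 * π * Complex.I * k i * ek k x) := by
    have e1 : HasFDerivAt (fun x => (φ x : ℂ)) (Complex.ofRealCLM.comp (fderiv ℝ φ x)) x :=
      Complex.ofRealCLM.hasFDerivAt.comp x ((h1.differentiable (by norm_num) x).hasFDerivAt)
    have e2 : HasFDerivAt (fun x => ∑ k ∈ S, a k * ek k x)
        (∑ k ∈ S, a k • fderiv ℝ (ek k) x) x :=
      HasFDerivAt.fun_sum fun k _ =>
        (((contDiff_ek k).differentiable (by norm_num) x).hasFDerivAt).const_mul (a k)
    rw [← funext hexp] at e2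
    have e3 := congrArg (fun L => L (bv i)) (e1.unique e2)
    simp only [ContinuousLinearMap.comp_apply, Complex.ofRealCLM_apply] at e3
    rw [e3]
    simp [fderiv_ek]
  have hb : |fderiv ℝ φ x (bv i)| ≤ lam * ∑ k ∈ S, ‖a k‖ := by
    rw [← Real.norm_eq_abs, ← Complex.norm_real, hderiv, Finset.mul_sum]
    refine (norm_sum_le _ _).trans (Finset.sum_le_sum fun k hk => ?_)
    have hj : (k i : ℝ) ^ 2 ≤ R ^ 2 := by
      rw [← (Finset.mem_filter.1 hk).2]
      exact Finset.single_le_sum (f := fun i => (k i : ℝ) ^ 2) (fun i _ => sq_nonneg _)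
        (Finset.mem_univ i)
    have habs : |(k i : ℝ)| ≤ R := abs_le_of_sq_le_sq hj hRpos.le
    simp only [norm_mul, norm_ek, Complex.norm_I, Complex.norm_intCast, Complex.norm_real,
      Real.norm_eq_abs, abs_of_pos Real.pi_pos, Complex.norm_ofNat, mul_one]
    rw [hlamR, mul_comm]
    gcongr
  have hcs : (∑ k ∈ S, ‖a k‖) ^ 2 ≤ S.card := by
    have := sq_sum_le_card_mul_sum_sq (s := S) (f := fun k => ‖a k‖)
    rwa [hpars, mul_one] at this
  apply Real.le_sqrt_of_sq_le
  calc |fderiv ℝ φ x (bv i)| ^ 2 ≤ (lam * ∑ k ∈ S, ‖a k‖) ^ 2 := by gcongr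
    _ = lam ^ 2 * (∑ k ∈ S, ‖a k‖) ^ 2 := by ring
    _ ≤ lam ^ 2 * (2 * lam ^ m) := by gcongr; exact hcs.trans hcard
    _ = 2 * lam ^ (m + 1 + 1) := by ring

/-! ### Coverings by small balls -/

/-- A set in the unit cube whose `(n-1)`-dimensional Hausdorff measure is less than `A` is covered
by countably many balls of radii at most `δ` with `∑ rᵢⁿ⁻¹ ≤ A`. -/
lemma exists_cover {n : ℕ} (hn : 2 ≤ n) {N : Set (Eu n)} (hN : N ⊆ Qcube n) {A : ℝ}
    (hA : μH[(n : ℝ) - 1] N < ENNReal.ofReal A) {δ : ℝ} (hδ : 0 < δ) :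
    ∃ (p : ℕ → Eu n) (r : ℕ → ℝ), (∀ i, p i ∈ Qcube n) ∧ (∀ i, 0 < r i ∧ r i ≤ δ) ∧
      (∀ x ∈ N, ∃ i, dist x (p i) < r i) ∧ ∀ I : Finset ℕ, ∑ i ∈ I, r i ^ (n - 1) ≤ A := by
  have hd : (0:ℝ) < (n : ℝ) - 1 := by
    have : (2:ℝ) ≤ n := by exact_mod_cast hn
    linarith
  have hcast : (n : ℝ) - 1 = ((n - 1 : ℕ) : ℝ) := by
    rw [Nat.cast_sub (by omega)]; simp
  -- the covering sets are taken of diameter at most `δ / 2`, leaving room to enlarge them to balls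
  rw [Measure.hausdorffMeasure_apply] at hA
  have h1 := (le_iSup₂ (f := fun (r : ENNReal) (_ : 0 < r) =>
    ⨅ (t : ℕ → Set (Eu n)) (_ : N ⊆ ⋃ n, t n) (_ : ∀ n, Metric.ediam (t n) ≤ r),
          ∑' i, ⨆ _ : (t i).Nonempty, Metric.ediam (t i) ^ ((n:ℝ) - 1))
    (ENNReal.ofReal (δ / 2)) (by simpa using hδ)).trans_lt hA
  simp only [iInf_lt_iff] at h1
  obtain ⟨t, hcov, hdiam, hsum⟩ := h1
  have hD : ∀ i, (⨆ _ : (t i).Nonempty, Metric.ediam (t i) ^ ((n:ℝ) - 1)) =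
      Metric.ediam (t i) ^ ((n:ℝ) - 1) := by
    intro i
    rcases (t i).eq_empty_or_nonempty with h | h
    · simp [h, ENNReal.zero_rpow_of_pos hd]
    · simp [h]
  simp only [hD] at hsum
  obtain ⟨ε, hεpos, hεsum⟩ := ENNReal.exists_pos_sum_of_countable
    (ε := ENNReal.ofReal A - ∑' i, Metric.ediam (t i) ^ ((n:ℝ) - 1))
    (by simpa [tsub_eq_zero_iff_le] using hsum) ℕ
  have hfin : ∀ i, Metric.ediam (t i) ≠ ⊤ := fun i =>
    ((hdiam i).trans_lt ENNReal.ofReal_lt_top).ne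
  have hr : ∀ i, ∃ r : ℝ, (Metric.ediam (t i)).toReal < r ∧ r ≤ δ ∧
      r ^ (n - 1) ≤ (Metric.ediam (t i)).toReal ^ (n - 1) + ε i := by
    intro i
    set D := (Metric.ediam (t i)).toReal
    have hDδ : D < δ := by
      have : D ≤ δ / 2 := ENNReal.toReal_le_of_le_ofReal (by positivity) (hdiam i)
      linarith
    have hcts : Filter.Tendsto (fun r : ℝ => r ^ (n - 1)) (nhds D) (nhds (D ^ (n-1))) :=
      (continuous_pow (n - 1)).tendsto D
    have hev : ∀ᶠ r in nhds D, r ^ (n - 1) < D ^ (n - 1) + ε i :=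
      hcts.eventually (gt_mem_nhds (by have : (0:ℝ) < ε i := by exact_mod_cast hεpos i
                                       linarith))
    have hev2 : ∀ᶠ r in nhdsWithin D (Ioi D), r ∈ Ioi D ∧ r < δ ∧
        r ^ (n - 1) < D ^ (n - 1) + ε i :=
      (eventually_mem_nhdsWithin).and
        (((gt_mem_nhds hDδ).filter_mono nhdsWithin_le_nhds).and
          (hev.filter_mono nhdsWithin_le_nhds))
    obtain ⟨r, h1, h2, h3⟩ := hev2.exists
    exact ⟨r, h1, h2.le, h3.le⟩
  choose r hr1 hr2 hr3 using hr
  have h0Q : (0 : Eu n) ∈ Qcube n := fun i => by simp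
  have hp : ∀ i, ∃ q : Eu n, q ∈ Qcube n ∧ ((t i ∩ N).Nonempty → q ∈ t i) := by
    intro i
    by_cases h : (t i ∩ N).Nonempty
    · obtain ⟨q, hq⟩ := h
      exact ⟨q, hN hq.2, fun _ => hq.1⟩
    · exact ⟨0, h0Q, fun h' => absurd h' h⟩
  choose p hp1 hp2 using hp
  have hrpos : ∀ i, 0 < r i := fun i => ENNReal.toReal_nonneg.trans_lt (hr1 i)
  refine ⟨p, r, hp1, fun i => ⟨hrpos i, hr2 i⟩, ?_, ?_⟩
  · intro x hx
    obtain ⟨i, hi⟩ := mem_iUnion.1 (hcov hx)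
    refine ⟨i, lt_of_le_of_lt ?_ (hr1 i)⟩
    rw [dist_edist]
    exact ENNReal.toReal_mono (hfin i) (Metric.edist_le_ediam_of_mem hi (hp2 i ⟨x, hi, hx⟩))
  · intro I
    have h2 : ∀ i, ENNReal.ofReal (r i ^ (n - 1)) ≤
        Metric.ediam (t i) ^ ((n:ℝ) - 1) + ε i := by
      intro i
      refine (ENNReal.ofReal_le_ofReal (hr3 i)).trans ?_
      rw [ENNReal.ofReal_add (by positivity) (by positivity), ENNReal.ofReal_coe_nnreal,
        ENNReal.ofReal_pow ENNReal.toReal_nonneg, ENNReal.ofReal_toReal (hfin i), hcast,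
        ENNReal.rpow_natCast]
    have h3 : ENNReal.ofReal (∑ i ∈ I, r i ^ (n - 1)) ≤ ENNReal.ofReal A := by
      rw [ENNReal.ofReal_sum_of_nonneg (fun i _ => by have := hrpos i; positivity)]
      calc ∑ i ∈ I, ENNReal.ofReal (r i ^ (n - 1))
          ≤ ∑ i ∈ I, (Metric.ediam (t i) ^ ((n:ℝ) - 1) + ε i) := Finset.sum_le_sum fun i _ => h2 i
        _ ≤ ∑' i, (Metric.ediam (t i) ^ ((n:ℝ) - 1) + ε i) := ENNReal.sum_le_tsum I
        _ = ∑' i, Metric.ediam (t i) ^ ((n:ℝ) - 1) + ∑' i, (ε i : ENNReal) := ENNReal.tsum_add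
        _ ≤ ∑' i, Metric.ediam (t i) ^ ((n:ℝ) - 1) +
            (ENNReal.ofReal A - ∑' i, Metric.ediam (t i) ^ ((n:ℝ) - 1)) := by gcongr
        _ = ENNReal.ofReal A := add_tsub_cancel_of_le hsum.le
    have hA0 : 0 < A := by
      by_contra h
      rw [ENNReal.ofReal_of_nonpos (not_lt.1 h)] at hsum
      exact absurd hsum not_lt_zero
    exact (ENNReal.ofReal_le_ofReal_iff hA0.le).1 h3

/-! ### Periodic cutoff functions -/

/-- A smooth `ℤⁿ`-periodic substitute for `π²` times the squared distance from `x` to `p + ℤⁿ`. -/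
def rho {n : ℕ} (p x : Eu n) : ℝ := ∑ j, sin (π * (x j - p j)) ^ 2

lemma per_rho {n : ℕ} (p : Eu n) : Per (rho p) := by
  intro x k
  unfold rho
  refine Finset.sum_congr rfl fun j _ => ?_
  rw [show π * ((x + WithLp.toLp 2 fun i => (k i : ℝ)) j - p j) = π * (x j - p j) + k j * π by
    simp; ring, Real.sin_add_int_mul_pi, mul_pow, ← zpow_natCast, ← zpow_mul, mul_comm (k j),
    zpow_mul]
  simp

lemma contDiff_rho {n : ℕ} (p : Eu n) : ContDiff ℝ 1 (rho p) := by
  unfold rho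
  fun_prop

lemma rho_lt {n : ℕ} {p x : Eu n} {r : ℝ} (h : dist x p < r) : rho p x < (π * r) ^ 2 := by
  have h1 : rho p x ≤ (π * dist x p) ^ 2 := by
    rw [mul_pow, EuclideanSpace.dist_eq, Real.sq_sqrt (Finset.sum_nonneg fun _ _ => sq_nonneg _),
      Finset.mul_sum]
    refine Finset.sum_le_sum fun j _ => ?_
    rw [Real.dist_eq, sq_abs, ← mul_pow]
    exact sq_le_sq.2 Real.abs_sin_le_abs
  refine h1.trans_lt ?_
  have := Real.pi_pos
  gcongr

/-- For `t` and `p` in `[0,1)`, the nearest point to `t` in `p + ℤ` is `p`, `p - 1` or `p + 1`. -/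
lemma mem_of_abs_sin_le {t p s : ℝ} (ht : t ∈ Ico (0:ℝ) 1) (hp : p ∈ Ico (0:ℝ) 1)
    (h : |sin (π * (t - p))| ≤ 2 * s) :
    t ∈ Icc (p - s) (p + s) ∪ Icc (p - 1 - s) (p - 1 + s) ∪ Icc (p + 1 - s) (p + 1 + s) := by
  set m := round (t - p) with hm
  have h1 : |t - p - m| ≤ 1 / 2 := abs_sub_round (t - p)
  have h2 : |sin (π * (t - p - m))| = |sin (π * (t - p))| := by
    rw [show π * (t - p - m) = π * (t - p) - m * π by ring, Real.sin_sub_int_mul_pi, abs_mul]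
    simp
  have h3 : 2 * |t - p - m| ≤ |sin (π * (t - p - m))| := by
    have h4 : |π * (t - p - m)| ≤ π / 2 := by
      rw [abs_mul, abs_of_pos Real.pi_pos]
      nlinarith [Real.pi_pos]
    have := Real.mul_abs_le_abs_sin h4
    rw [abs_mul, abs_of_pos Real.pi_pos] at this
    calc 2 * |t - p - m| = 2 / π * (π * |t - p - m|) := by field_simp
      _ ≤ _ := this
  have h5 : |t - p - m| ≤ s := by linarith
  have h6 := abs_le.1 h1
  have hm1 : (-2 : ℝ) < m := by linarith [ht.1, hp.2, h6.2]
  have hm2 : (m : ℝ) < 2 := by linarith [ht.2, hp.1, h6.1]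
  have hm1' : -2 < m := by exact_mod_cast hm1
  have hm2' : m < 2 := by exact_mod_cast hm2
  have h7 := abs_le.1 h5
  have hcases : m = 0 ∨ m = -1 ∨ m = 1 := by omega
  rcases hcases with hm0 | hm0 | hm0 <;> rw [hm0] at h7 <;> push_cast at h7
  · exact Or.inl (Or.inl ⟨by linarith, by linarith⟩)
  · exact Or.inl (Or.inr ⟨by linarith, by linarith⟩)
  · exact Or.inr ⟨by linarith, by linarith⟩

/-- The part of the periodic neighbourhood of `p` in `Q` lies in a product of sets, each a union of
three intervals of length `2s`. -/
lemma volume_rho_le {n : ℕ} {p : Eu n} (hp : p ∈ Qcube n) {s : ℝ} (hs : 0 < s) :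
    volume.real (Qcube n ∩ {x | rho p x ≤ 2 * s ^ 2}) ≤ (6 * s) ^ n := by
  let U : Fin n → Set ℝ := fun j => Icc (p j - s) (p j + s) ∪ Icc (p j - 1 - s) (p j - 1 + s) ∪
    Icc (p j + 1 - s) (p j + 1 + s)
  have hU : ∀ j, volume (U j) ≤ ENNReal.ofReal (6 * s) := by
    intro j
    refine (measure_union_le _ _).trans ((add_le_add_left (measure_union_le _ _) _).trans ?_)
    simp only [Real.volume_Icc]
    rw [← ENNReal.ofReal_add (by linarith) (by linarith),
      ← ENNReal.ofReal_add (by linarith) (by linarith)]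
    exact ENNReal.ofReal_le_ofReal (by linarith)
  have hsub : WithLp.toLp 2 ⁻¹' (Qcube n ∩ {x | rho p x ≤ 2 * s ^ 2}) ⊆ Set.univ.pi U := by
    rintro y ⟨hy1, hy2⟩ j -
    refine mem_of_abs_sin_le (hy1 j) (hp j) ?_
    have h1 : sin (π * (y j - p j)) ^ 2 ≤ 2 * s ^ 2 :=
      (Finset.single_le_sum (f := fun j => sin (π * (y j - p j)) ^ 2) (fun _ _ => sq_nonneg _)
        (Finset.mem_univ j)).trans hy2
    exact abs_le_of_sq_le_sq (by nlinarith [sq_nonneg s]) (by linarith)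
  have hmeas : MeasurableSet (Qcube n ∩ {x | rho p x ≤ 2 * s ^ 2}) :=
    (measurableSet_Qcube n).inter
      (isClosed_le (contDiff_rho p).continuous continuous_const).measurableSet
  have : volume (Qcube n ∩ {x | rho p x ≤ 2 * s ^ 2}) ≤ ENNReal.ofReal ((6 * s) ^ n) := by
    rw [← (PiLp.volume_preserving_toLp (Fin n)).measure_preimage hmeas.nullMeasurableSet]
    refine (measure_mono hsub).trans ?_
    rw [volume_pi_pi, ENNReal.ofReal_pow (by positivity)]
    refine (Finset.prod_le_prod' fun j _ => hU j).trans ?_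
    simp
  exact ENNReal.toReal_le_of_le_ofReal (by positivity) this

lemma exists_deriv_bound : ∃ B : ℝ, 0 < B ∧ ∀ t, |deriv smoothTransition t| ≤ B := by
  have hc : Continuous (deriv smoothTransition) :=
    (Real.smoothTransition.contDiff (n := 1)).continuous_deriv (by norm_num)
  obtain ⟨B, hB⟩ := isCompact_Icc.exists_bound_of_continuousOn (s := Icc (0:ℝ) 1) hc.continuousOn
  refine ⟨max B 1, by positivity, fun t => ?_⟩
  by_cases ht : t ∈ Icc (0:ℝ) 1
  · exact (hB t ht).trans (le_max_left _ _)
  · have : deriv smoothTransition t = 0 := by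
      rw [mem_Icc, not_and_or, not_le, not_le] at ht
      rcases ht with ht | ht
      · have : smoothTransition =ᶠ[nhds t] fun _ => 0 := by
          filter_upwards [gt_mem_nhds ht] with u hu
          exact smoothTransition.zero_of_nonpos (le_of_lt hu)
        rw [this.deriv_eq]; simp
      · have : smoothTransition =ᶠ[nhds t] fun _ => 1 := by
          filter_upwards [lt_mem_nhds ht] with u hu
          exact smoothTransition.one_of_one_le (le_of_lt hu)
        rw [this.deriv_eq]; simp
    rw [this, abs_zero]
    positivity

/-- A periodic cutoff at scale `s` around `p`: it vanishes where `rho p ≤ s²` and equals `1` where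
`rho p ≥ 2 s²`. -/
def eta {n : ℕ} (p : Eu n) (s : ℝ) (x : Eu n) : ℝ := smoothTransition (rho p x / s ^ 2 - 1)

lemma per_eta {n : ℕ} (p : Eu n) (s : ℝ) : Per (eta p s) := fun x k => by
  simp only [eta, per_rho p x k]

lemma contDiff_eta {n : ℕ} (p : Eu n) (s : ℝ) : ContDiff ℝ 1 (eta p s) :=
  (Real.smoothTransition.contDiff (n := 1)).comp
    (((contDiff_rho p).div_const _).sub contDiff_const)

lemma eta_eq_zero {n : ℕ} {p : Eu n} {s : ℝ} (hs : 0 < s) {x : Eu n} (h : rho p x ≤ s ^ 2) :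
    eta p s x = 0 :=
  smoothTransition.zero_of_nonpos (by
    rw [sub_nonpos, div_le_one (by positivity)]; exact h)

lemma eta_eq_one {n : ℕ} {p : Eu n} {s : ℝ} (hs : 0 < s) {x : Eu n} (h : 2 * s ^ 2 ≤ rho p x) :
    eta p s x = 1 :=
  smoothTransition.one_of_one_le (by
    rw [le_sub_iff_add_le, le_div_iff₀ (by positivity)]; linarith)

/-- The cutoff has gradient of size `O(1/s)`, supported in the `s`-neighbourhood `rho p ≤ 2 s²`. -/
lemma abs_fderiv_eta_le {n : ℕ} {B : ℝ} (hB0 : 0 < B) (hB : ∀ t, |deriv smoothTransition t| ≤ B)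
    (p : Eu n) {s : ℝ} (hs : 0 < s) (x : Eu n) (j : Fin n) :
    |fderiv ℝ (eta p s) x (bv j)| ≤
      {x | rho p x ≤ 2 * s ^ 2}.indicator (fun _ => 4 * π * B / s) x := by
  by_cases hx : rho p x ≤ 2 * s ^ 2
  · rw [indicator_of_mem (show x ∈ {x | rho p x ≤ 2 * s ^ 2} from hx)]
    have hρ : HasLineDerivAt ℝ (rho p) (2 * π * (sin (π * (x j - p j)) * cos (π * (x j - p j))))
        x (bv j) := by
      have e : (fun t : ℝ => rho p (x + t • bv j)) = fun t : ℝ =>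
          (∑ i ∈ Finset.univ.erase j, sin (π * (x i - p i)) ^ 2) + sin (π * (x j + t - p j)) ^ 2 := by
        ext t
        rw [rho, ← Finset.sum_erase_add _ _ (Finset.mem_univ j)]
        congr 1
        · refine Finset.sum_congr rfl fun i hi => ?_
          simp [Finset.ne_of_mem_erase hi]
        · simp
      unfold HasLineDerivAt
      rw [e]
      have h1 : HasDerivAt (fun t : ℝ => π * (x j + t - p j)) (π * 1) 0 :=
        (((hasDerivAt_id (0:ℝ)).const_add (x j)).sub_const (p j)).const_mul π
      have h2 := ((h1.sin).fun_pow 2).const_add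
        (∑ i ∈ Finset.univ.erase j, sin (π * (x i - p i)) ^ 2)
      convert h2 using 1
      simp
      ring
    have hst : HasDerivAt smoothTransition (deriv smoothTransition (rho p x / s ^ 2 - 1))
        (rho p x / s ^ 2 - 1) :=
      ((Real.smoothTransition.contDiff (n := 1)).differentiable (by norm_num) _).hasDerivAt
    have hη : HasLineDerivAt ℝ (eta p s) (deriv smoothTransition (rho p x / s ^ 2 - 1) *
        (2 * π * (sin (π * (x j - p j)) * cos (π * (x j - p j))) / s ^ 2)) x (bv j) := by
      unfold HasLineDerivAt at hρ ⊢
      have h3 := (hρ.div_const (s ^ 2)).sub_const 1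
      have hst' : HasDerivAt smoothTransition (deriv smoothTransition (rho p x / s ^ 2 - 1))
        (rho p (x + (0:ℝ) • bv j) / s ^ 2 - 1) := by simpa using hst
      exact hst'.comp (0:ℝ) h3
    have hfd := (((contDiff_eta p s).differentiable (by norm_num) x).hasFDerivAt.hasLineDerivAt
      (bv j)).unique hη
    rw [hfd, abs_mul, abs_div, abs_mul, abs_mul (sin _), abs_of_pos (show 0 < 2 * π by positivity),
      abs_of_pos (show 0 < s ^ 2 by positivity)]
    have hsin : |sin (π * (x j - p j))| ≤ 2 * s := by
      have h1 : sin (π * (x j - p j)) ^ 2 ≤ 2 * s ^ 2 :=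
        (Finset.single_le_sum (f := fun j => sin (π * (x j - p j)) ^ 2) (fun _ _ => sq_nonneg _)
          (Finset.mem_univ j)).trans hx
      exact abs_le_of_sq_le_sq (by nlinarith [sq_nonneg s]) (by linarith)
    have hcos := Real.abs_cos_le_one (π * (x j - p j))
    calc _ ≤ B * (2 * π * (2 * s * 1) / s ^ 2) := by
          have := hB (rho p x / s ^ 2 - 1)
          have := Real.pi_pos
          gcongr
      _ = 4 * π * B / s := by field_simp; ring
  · rw [indicator_of_notMem (show x ∉ {x | rho p x ≤ 2 * s ^ 2} from hx)]
    have : eta p s =ᶠ[nhds x] fun _ => 1 := by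
      filter_upwards [(contDiff_rho p).continuous.continuousAt.eventually_const_lt
        (not_le.1 hx)] with y hy
      exact eta_eq_one hs hy.le
    rw [this.fderiv_eq]
    simp

/-! ### The eigenvalue equation tested against a cutoff -/

lemma exists_translate_mem {n : ℕ} (x : Eu n) :
    ∃ k : Fin n → ℤ, (x + WithLp.toLp 2 fun i => (k i : ℝ)) ∈ Qcube n := by
  refine ⟨fun i => -⌊x i⌋, fun i => ?_⟩
  have h1 := Int.floor_le (x i)
  have h2 := Int.lt_floor_add_one (x i)
  simp only [PiLp.add_apply, Int.cast_neg, mem_Ico]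
  constructor <;> linarith

lemma abs_fderiv_prod_le {n : ℕ} (I : Finset ℕ) (f : ℕ → Eu n → ℝ) (hf : ∀ i, ContDiff ℝ 1 (f i))
    (h01 : ∀ i x, 0 ≤ f i x ∧ f i x ≤ 1) (x v : Eu n) :
    |fderiv ℝ (fun x => ∏ i ∈ I, f i x) x v| ≤ ∑ i ∈ I, |fderiv ℝ (f i) x v| := by
  have h := HasFDerivAt.finsetProd (u := I) (g := f) (g' := fun i => fderiv ℝ (f i) x) (x := x)
    (fun i _ => ((hf i).differentiable (by norm_num) x).hasFDerivAt)
  rw [h.fderiv]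
  simp only [sum_apply, smul_apply, smul_eq_mul]
  refine (Finset.abs_sum_le_sum_abs _ _).trans (Finset.sum_le_sum fun i _ => ?_)
  rw [abs_mul]
  refine mul_le_of_le_one_left (abs_nonneg _) ?_
  rw [abs_of_nonneg (Finset.prod_nonneg fun j _ => (h01 j x).1)]
  exact Finset.prod_le_one (fun j _ => (h01 j x).1) (fun j _ => (h01 j x).2)

/-- If `η` is a `C¹` periodic function vanishing near `{φ = c}`, then `η 1_{φ > c}` is again `C¹`, and
its gradient is bounded by that of `η`. Integrating the eigenvalue equation against it gives the
estimate. -/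
lemma test_function {n : ℕ} {lam : ℝ} {φ : Eu n → ℝ}
    (hφ : ContDiff ℝ (⊤ : ℕ∞) φ) (pφ : Per φ) (hlap : ∀ x, lap φ x = -lam ^ 2 * φ x)
    {G : ℝ} (hG : ∀ x i, |fderiv ℝ φ x (bv i)| ≤ G) {c : ℝ}
    {η : Eu n → ℝ} (hη : ContDiff ℝ 1 η) (pη : Per η)
    (hzero : ∀ x, φ x = c → η =ᶠ[nhds x] fun _ => 0)
    {b : Eu n → ℝ} (hb : ∀ x j, |fderiv ℝ η x (bv j)| ≤ b x) (hbint : IntegrableOn b (Qcube n)) :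
    IntegrableOn (fun x => (if c < φ x then η x else 0) * φ x) (Qcube n) ∧
    lam ^ 2 * ∫ x in Qcube n, (if c < φ x then η x else 0) * φ x ≤
      n * G * ∫ x in Qcube n, b x := by
  have h1 : ContDiff ℝ 1 φ := hφ.of_le (by exact_mod_cast le_top)
  have hd : ∀ i, ContDiff ℝ 1 fun x => fderiv ℝ φ x (bv i) := fun i =>
    (hφ.fderiv_right (m := 1)
      (by rw [one_add_one_eq_two]; exact WithTop.coe_le_coe.2 le_top)).clm_apply contDiff_const
  set g : Eu n → ℝ := fun x => if c < φ x then η x else 0 with hg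
  have hgt : ∀ x, c < φ x → g =ᶠ[nhds x] η := fun x hx => by
    filter_upwards [h1.continuous.continuousAt.eventually_const_lt hx] with y hy
    simp [hg, hy]
  have hle : ∀ x, φ x ≤ c → g =ᶠ[nhds x] fun _ => 0 := fun x hx => by
    rcases hx.lt_or_eq with hx | hx
    · filter_upwards [h1.continuous.continuousAt.eventually_lt_const hx] with y hy
      simp [hg, not_lt.2 hy.le]
    · filter_upwards [hzero x hx] with y hy
      simp [hg, hy]
  have hgC : ContDiff ℝ 1 g := by
    rw [contDiff_iff_contDiffAt]
    intro x
    rcases lt_or_ge c (φ x) with hx | hx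
    · exact hη.contDiffAt.congr_of_eventuallyEq (hgt x hx)
    · exact contDiffAt_const.congr_of_eventuallyEq (hle x hx)
  have hgb : ∀ x j, |fderiv ℝ g x (bv j)| ≤ b x := by
    intro x j
    rcases lt_or_ge c (φ x) with hx | hx
    · rw [(hgt x hx).fderiv_eq]; exact hb x j
    · rw [(hle x hx).fderiv_eq]
      simpa using (abs_nonneg _).trans (hb x j)
  have pg : Per g := fun x k => by simp only [hg, pφ x k, pη x k]
  have cd : ∀ j, Continuous fun x => fderiv ℝ g x (bv j) := fun j =>
    (hgC.continuous_fderiv (by norm_num)).clm_apply continuous_const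
  have cdd : ∀ i, Continuous fun x => fderiv ℝ (fun y => fderiv ℝ φ y (bv i)) x (bv i) := fun i =>
    ((hd i).continuous_fderiv (by norm_num)).clm_apply continuous_const
  refine ⟨integrableOn_Qcube (hgC.continuous.mul h1.continuous), ?_⟩
  have e1 : lam ^ 2 * ∫ x in Qcube n, g x * φ x =
      ∑ j, ∫ x in Qcube n, fderiv ℝ g x (bv j) * fderiv ℝ φ x (bv j) := by
    have e2 : ∀ j, ∫ x in Qcube n, fderiv ℝ g x (bv j) * fderiv ℝ φ x (bv j) =
        -∫ x in Qcube n, g x * fderiv ℝ (fun y => fderiv ℝ φ y (bv j)) x (bv j) := fun j => by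
      rw [integral_parts hgC (hd j) pg (per_fderiv pφ _) j, neg_neg]
    simp only [e2]
    rw [Finset.sum_neg_distrib, ← integral_finsetSum]
    · rw [← integral_const_mul, ← integral_neg]
      congr 1
      ext x
      have := hlap x
      rw [lap] at this
      rw [← Finset.mul_sum, this]
      ring
    · intro j _
      exact integrableOn_Qcube (hgC.continuous.mul (cdd j))
  rw [e1]
  calc ∑ j, ∫ x in Qcube n, fderiv ℝ g x (bv j) * fderiv ℝ φ x (bv j)
      ≤ ∑ j : Fin n, ∫ x in Qcube n, G * b x := by
        refine Finset.sum_le_sum fun j _ => ?_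
        refine setIntegral_mono (integrableOn_Qcube ((cd j).mul (hd j).continuous))
          (hbint.const_mul G) fun x => ?_
        refine (le_abs_self _).trans ?_
        rw [abs_mul, mul_comm]
        have := (abs_nonneg _).trans (hG x j)
        exact mul_le_mul (hG x j) (hgb x j) (abs_nonneg _) this
    _ = n * G * ∫ x in Qcube n, b x := by
        rw [integral_const_mul]
        simp [mul_assoc]

lemma integral_indicator_rho {n : ℕ} (p : Eu n) (s C : ℝ) :
    ∫ x in Qcube n, {x | rho p x ≤ 2 * s ^ 2}.indicator (fun _ => C) x =
      C * volume.real (Qcube n ∩ {x | rho p x ≤ 2 * s ^ 2}) := by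
  rw [setIntegral_indicator (isClosed_le (contDiff_rho p).continuous continuous_const).measurableSet,
    setIntegral_const, smul_eq_mul, mul_comm]

lemma integrableOn_indicator_rho {n : ℕ} (p : Eu n) (s C : ℝ) :
    IntegrableOn ({x | rho p x ≤ 2 * s ^ 2}.indicator (fun _ => C)) (Qcube n) :=
  (integrableOn_Qcube continuous_const).indicator
    (isClosed_le (contDiff_rho p).continuous continuous_const).measurableSet

/-- The estimate obtained from one covering of the level set by balls of radius at most `δ`. -/
lemma core_bound {m : ℕ} {B : ℝ} (hB0 : 0 < B) (hB : ∀ t, |deriv smoothTransition t| ≤ B)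
    {lam : ℝ} {φ : Eu (m + 1) → ℝ}
    (hφ : ContDiff ℝ (⊤ : ℕ∞) φ) (pφ : Per φ) (hlap : ∀ x, lap φ x = -lam ^ 2 * φ x)
    {G : ℝ} (hG : ∀ x i, |fderiv ℝ φ x (bv i)| ≤ G) {c : ℝ} (hc : 0 < c)
    {M : ℝ} (hM : ∀ x ∈ Qcube (m + 1), φ x ≤ M)
    {A δ : ℝ} {p : ℕ → Eu (m + 1)} {r : ℕ → ℝ} (hp : ∀ i, p i ∈ Qcube (m + 1))
    (hr : ∀ i, 0 < r i ∧ r i ≤ δ)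
    (hcov : ∀ x ∈ {x ∈ Qcube (m + 1) | φ x = c}, ∃ i, dist x (p i) < r i)
    (hsum : ∀ I : Finset ℕ, ∑ i ∈ I, r i ^ m ≤ A) :
    lam ^ 2 * ∫ x in {x ∈ Qcube (m + 1) | c ≤ φ x}, φ x ≤
      ((m + 1) * (4 * B * (6 * π) ^ (m + 1))) * G * A +
        δ * (lam ^ 2 * |M| * (6 * π) ^ (m + 1) * A) := by
  have h1 : ContDiff ℝ 1 φ := hφ.of_le (by exact_mod_cast le_top)
  have hG0 : 0 ≤ G := (abs_nonneg _).trans (hG 0 0)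
  -- `rho` behaves like `π²` times a squared distance, whence the factor `π` in the scale
  set s : ℕ → ℝ := fun i => π * r i with hs
  have hspos : ∀ i, 0 < s i := fun i => mul_pos Real.pi_pos (hr i).1
  set V : ℕ → Set (Eu (m+1)) := fun i => {x | rho (p i) x ≤ 2 * s i ^ 2} with hV
  have hopen : ∀ i, IsOpen {x | rho (p i) x < s i ^ 2} := fun i =>
    isOpen_lt (contDiff_rho (p i)).continuous continuous_const
  -- the periodized neighbourhoods cover the level set in all of `ℝⁿ`
  have hcov' : ∀ x, φ x = c → ∃ i, rho (p i) x < s i ^ 2 := by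
    intro x hx
    obtain ⟨k, hk⟩ := exists_translate_mem x
    obtain ⟨i, hi⟩ := hcov _ ⟨hk, (pφ x k).trans hx⟩
    exact ⟨i, by rw [← per_rho (p i) x k]; exact rho_lt hi⟩
  obtain ⟨I, hI⟩ := ((isCompact_Ccube (m+1)).inter_right
    (isClosed_eq h1.continuous (continuous_const (y := c)))).elim_finite_subcover
    (fun i => {x | rho (p i) x < s i ^ 2}) hopen
    (fun x hx => mem_iUnion.2 (hcov' x hx.2))
  have hI' : ∀ x, φ x = c → ∃ i ∈ I, rho (p i) x < s i ^ 2 := by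
    intro x hx
    obtain ⟨k, hk⟩ := exists_translate_mem x
    obtain ⟨i, hi⟩ := mem_iUnion.1 (hI ⟨Qcube_subset _ hk, (pφ x k).trans hx⟩)
    obtain ⟨hiI, hi⟩ := mem_iUnion.1 hi
    exact ⟨i, hiI, by rw [← per_rho (p i) x k]; exact hi⟩
  set η : Eu (m+1) → ℝ := fun x => ∏ i ∈ I, eta (p i) (s i) x with hη
  have h01 : ∀ i x, 0 ≤ eta (p i) (s i) x ∧ eta (p i) (s i) x ≤ 1 := fun i x =>
    ⟨smoothTransition.nonneg _, smoothTransition.le_one _⟩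
  have hηC : ContDiff ℝ 1 η := contDiff_prod fun i _ => contDiff_eta (p i) (s i)
  have hηper : Per η := fun x k => by simp only [hη, per_eta _ _ x k]
  have hη0 : ∀ x, 0 ≤ η x := fun x => Finset.prod_nonneg fun i _ => (h01 i x).1
  have hzero : ∀ x, φ x = c → η =ᶠ[nhds x] fun _ => 0 := by
    intro x hx
    obtain ⟨i, hiI, hi⟩ := hI' x hx
    filter_upwards [(hopen i).mem_nhds hi] with y hy
    exact Finset.prod_eq_zero hiI (eta_eq_zero (hspos i) (le_of_lt hy))
  set b : Eu (m+1) → ℝ := fun x => ∑ i ∈ I, (V i).indicator (fun _ => 4 * π * B / s i) x with hb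
  have hbb : ∀ x j, |fderiv ℝ η x (bv j)| ≤ b x := fun x j =>
    (abs_fderiv_prod_le I (fun i => eta (p i) (s i)) (fun i => contDiff_eta _ _) h01 x _).trans
      (Finset.sum_le_sum fun i _ => abs_fderiv_eta_le hB0 hB (p i) (hspos i) x j)
  have hbint : IntegrableOn b (Qcube (m+1)) :=
    integrable_finsetSum _ fun i _ => integrableOn_indicator_rho (p i) (s i) _
  obtain ⟨hgint, htest⟩ := test_function hφ pφ hlap hG hηC hηper hzero hbb hbint
  have hbval : ∫ x in Qcube (m+1), b x ≤ 4 * B * (6 * π) ^ (m + 1) * A := by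
    rw [hb, integral_finsetSum _ fun i _ => integrableOn_indicator_rho (p i) (s i) _]
    calc _ ≤ ∑ i ∈ I, 4 * B * (6 * π) ^ (m + 1) * r i ^ m := by
          refine Finset.sum_le_sum fun i _ => ?_
          rw [integral_indicator_rho]
          have hsi := hspos i
          have hri := (hr i).1
          calc _ ≤ 4 * π * B / s i * (6 * s i) ^ (m + 1) := by
                gcongr
                exact volume_rho_le (hp i) hsi
            _ = _ := by
                simp only [hs]
                field_simp
                ring
      _ ≤ _ := by
          rw [← Finset.mul_sum]
          have := hsum I
          gcongr
  have hvol : ∑ i ∈ I, volume.real (Qcube (m+1) ∩ V i) ≤ δ * ((6 * π) ^ (m + 1) * A) := by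
    calc _ ≤ ∑ i ∈ I, δ * (6 * π) ^ (m + 1) * r i ^ m := by
          refine Finset.sum_le_sum fun i _ => ?_
          have hsi := hspos i
          have hri := (hr i).1
          calc _ ≤ (6 * s i) ^ (m + 1) := volume_rho_le (hp i) hsi
            _ = r i * (6 * π) ^ (m + 1) * r i ^ m := by simp only [hs]; ring
            _ ≤ _ := by gcongr; exact (hr i).2
      _ ≤ _ := by
          rw [← Finset.mul_sum, mul_assoc]
          have := hsum I
          have := (hr 0).1.le.trans (hr 0).2
          gcongr
  -- where `φ ≥ c`, either all cutoffs equal `1`, or the point lies in some `V i` and `φ ≤ |M|` there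
  have hmain : ∫ x in {x ∈ Qcube (m + 1) | c ≤ φ x}, φ x ≤
      (∫ x in Qcube (m+1), (if c < φ x then η x else 0) * φ x) +
        |M| * ∑ i ∈ I, volume.real (Qcube (m+1) ∩ V i) := by
    have hcl : MeasurableSet {x | c ≤ φ x} :=
      (isClosed_le continuous_const h1.continuous).measurableSet
    have e1 : ∫ x in {x ∈ Qcube (m + 1) | c ≤ φ x}, φ x =
        ∫ x in Qcube (m+1), {x | c ≤ φ x}.indicator φ x := (setIntegral_indicator hcl).symm
    have e2 : |M| * ∑ i ∈ I, volume.real (Qcube (m+1) ∩ V i) =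
        ∫ x in Qcube (m+1), ∑ i ∈ I, (V i).indicator (fun _ => |M|) x := by
      rw [integral_finsetSum _ fun i _ => integrableOn_indicator_rho (p i) (s i) _, Finset.mul_sum]
      exact Finset.sum_congr rfl fun i _ => (integral_indicator_rho _ _ _).symm
    have hMint : IntegrableOn (fun x => ∑ i ∈ I, (V i).indicator (fun _ => |M|) x) (Qcube (m+1)) :=
      integrable_finsetSum _ fun i _ => integrableOn_indicator_rho (p i) (s i) _
    rw [e1, e2, ← integral_add hgint hMint]
    refine setIntegral_mono_on ((integrableOn_Qcube h1.continuous).indicator hcl)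
      (hgint.add hMint) (measurableSet_Qcube _) fun x hxQ => ?_
    have hn1 : 0 ≤ (if c < φ x then η x else 0) * φ x := by
      split_ifs with h
      · exact mul_nonneg (hη0 x) (hc.trans h).le
      · simp
    have hn2 : ∀ i ∈ I, 0 ≤ (V i).indicator (fun _ => |M|) x := fun i _ =>
      indicator_nonneg (fun _ _ => abs_nonneg M) x
    by_cases hx : c ≤ φ x
    · rw [indicator_of_mem (show x ∈ {x | c ≤ φ x} from hx)]
      by_cases hex : ∃ i ∈ I, x ∈ V i
      · obtain ⟨i, hiI, hi⟩ := hex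
        have h2 := Finset.single_le_sum hn2 hiI
        rw [indicator_of_mem hi] at h2
        have h3 := (hM x hxQ).trans (le_abs_self M)
        linarith
      · push Not at hex
        have hne : c < φ x := by
          refine lt_of_le_of_ne hx fun h => ?_
          obtain ⟨i, hiI, hi⟩ := hI' x h.symm
          exact hex i hiI (show rho (p i) x ≤ 2 * s i ^ 2 by nlinarith [sq_nonneg (s i)])
        have h1' : η x = 1 := Finset.prod_eq_one fun i hiI =>
          eta_eq_one (hspos i) (not_le.1 (hex i hiI)).le
        rw [if_pos hne, h1', one_mul]
        linarith [Finset.sum_nonneg hn2]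
    · rw [indicator_of_notMem (show x ∉ {x | c ≤ φ x} from hx)]
      linarith [Finset.sum_nonneg hn2]
  calc _ ≤ lam ^ 2 * ((∫ x in Qcube (m+1), (if c < φ x then η x else 0) * φ x) +
        |M| * ∑ i ∈ I, volume.real (Qcube (m+1) ∩ V i)) := by gcongr
    _ = lam ^ 2 * (∫ x in Qcube (m+1), (if c < φ x then η x else 0) * φ x) +
        lam ^ 2 * |M| * ∑ i ∈ I, volume.real (Qcube (m+1) ∩ V i) := by ring
    _ ≤ ((m + 1 : ℕ) : ℝ) * G * (4 * B * (6 * π) ^ (m + 1) * A) +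
        lam ^ 2 * |M| * (δ * ((6 * π) ^ (m + 1) * A)) := by
        exact add_le_add (htest.trans (mul_le_mul_of_nonneg_left hbval (by positivity)))
          (mul_le_mul_of_nonneg_left hvol (by positivity))
    _ = _ := by push_cast; ring

/-- Letting the radii of the covering balls tend to zero: the one-sided form of the theorem, in
terms of a bound `G` for the partial derivatives. -/
lemma one_sided {m : ℕ} (hm : 1 ≤ m) {B : ℝ} (hB0 : 0 < B)
    (hB : ∀ t, |deriv smoothTransition t| ≤ B)
    {lam : ℝ} {φ : Eu (m + 1) → ℝ}
    (hφ : ContDiff ℝ (⊤ : ℕ∞) φ) (pφ : Per φ) (hlap : ∀ x, lap φ x = -lam ^ 2 * φ x)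
    {G : ℝ} (hG0 : 0 < G) (hG : ∀ x i, |fderiv ℝ φ x (bv i)| ≤ G) {c : ℝ} (hc : 0 < c) :
    ENNReal.ofReal (lam ^ 2 / (((m + 1) * (4 * B * (6 * π) ^ (m + 1))) * G) *
      ∫ x in {x ∈ Qcube (m + 1) | c ≤ φ x}, φ x) ≤
      μH[((m + 1 : ℕ) : ℝ) - 1] {x ∈ Qcube (m + 1) | φ x = c} := by
  obtain ⟨M, hM⟩ := ((isCompact_Ccube (m + 1)).image hφ.continuous).bddAbove
  have hM' : ∀ x ∈ Qcube (m + 1), φ x ≤ M := fun x hx =>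
    hM (mem_image_of_mem _ (Qcube_subset _ hx))
  set K : ℝ := (m + 1) * (4 * B * (6 * π) ^ (m + 1)) with hK
  have hK0 : 0 < K := by positivity
  refine le_of_forall_gt fun a ha => ?_
  obtain ⟨A, hA1, hA2⟩ := ENNReal.lt_iff_exists_nnreal_btwn.1 ha
  refine lt_of_le_of_lt ?_ hA2
  rw [← ENNReal.ofReal_coe_nnreal] at hA1 ⊢
  refine ENNReal.ofReal_le_ofReal ?_
  rw [div_mul_eq_mul_div, div_le_iff₀ (by positivity), mul_comm (A : ℝ)]
  refine le_of_forall_pos_le_add fun ε hε => ?_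
  set D : ℝ := lam ^ 2 * |M| * (6 * π) ^ (m + 1) * A with hD
  have hD0 : 0 ≤ D := by positivity
  have hδ : 0 < ε / (D + 1) := by positivity
  obtain ⟨p, r, hp, hr, hcov, hsum⟩ := exists_cover (n := m + 1) (by omega)
    (N := {x ∈ Qcube (m + 1) | φ x = c}) (fun x hx => hx.1) hA1 hδ
  have h := core_bound hB0 hB hφ pφ hlap hG hc hM' hp hr hcov hsum
  refine h.trans (add_le_add le_rfl ?_)
  rw [← hD, div_mul_eq_mul_div, div_le_iff₀ (by positivity)]
  nlinarith

/-! ### Both level sets -/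

lemma lap_neg {n : ℕ} (φ : Eu n → ℝ) (x : Eu n) : lap (fun y => -φ y) x = -lap φ x := by
  simp [lap, fderiv_fun_neg, Finset.sum_neg_distrib]

lemma integral_abs_split {n : ℕ} {φ : Eu n → ℝ} (hφ : Continuous φ) {c : ℝ} (hc : 0 < c) :
    ∫ x in {x ∈ Qcube n | c ≤ |φ x|}, |φ x| =
      (∫ x in {x ∈ Qcube n | c ≤ φ x}, φ x) + ∫ x in {x ∈ Qcube n | c ≤ -φ x}, -φ x := by
  have hU : {x ∈ Qcube n | c ≤ |φ x|} =
      {x ∈ Qcube n | c ≤ φ x} ∪ {x ∈ Qcube n | c ≤ -φ x} := by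
    ext x
    simp only [mem_ofPred_eq, mem_union, le_abs]
    tauto
  have m1 : MeasurableSet {x ∈ Qcube n | c ≤ φ x} :=
    (measurableSet_Qcube n).inter (isClosed_le continuous_const hφ).measurableSet
  have m2 : MeasurableSet {x ∈ Qcube n | c ≤ -φ x} :=
    (measurableSet_Qcube n).inter (isClosed_le continuous_const hφ.neg).measurableSet
  have hi := integrableOn_Qcube (n := n) hφ.abs
  rw [hU, setIntegral_union ?_ m2 (hi.mono_set fun x hx => hx.1) (hi.mono_set fun x hx => hx.1)]
  · congr 1
    · refine setIntegral_congr_fun m1 fun x hx => abs_of_pos (hc.trans_le hx.2)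
    · refine setIntegral_congr_fun m2 fun x hx => abs_of_neg ?_
      linarith [hx.2]
  · refine Set.disjoint_left.2 fun x h1 h2 => ?_
    linarith [h1.2, h2.2]

/-- The bound `√(2λⁿ⁺¹)` for the gradient produces the power `λ^{(3-n)/2}`; here `n = m + 1`. -/
lemma constant_eq {m : ℕ} {lam K : ℝ} (hlam : 0 < lam) :
    lam ^ 2 / (K * √(2 * lam ^ (m + 1 + 1))) =
      1 / (K * √2) * lam ^ (((3 : ℝ) - ((m + 1 : ℕ) : ℝ)) / 2) := by
  have h : lam ^ (((3 : ℝ) - ((m + 1 : ℕ) : ℝ)) / 2) = lam ^ 2 / √(lam ^ (m + 1 + 1)) := by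
    rw [Real.sqrt_eq_rpow, ← Real.rpow_natCast lam (m + 1 + 1), ← Real.rpow_mul hlam.le,
      ← Real.rpow_natCast lam 2, ← Real.rpow_sub hlam]
    congr 1
    push_cast
    ring
  rw [h, Real.sqrt_mul (by norm_num), div_mul_div_comm, one_mul, mul_assoc]

theorem level_set_measure_lower_bound (n : ℕ) (hn : 2 ≤ n) :
    ∃ C : ℝ, 0 < C ∧
      ∀ (lam : ℝ), 0 < lam →
        ∀ (φ : EuclideanSpace ℝ (Fin n) → ℝ), ContDiff ℝ (⊤ : ℕ∞) φ → ZPeriodic φ →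
          (∀ x, lap φ x = -lam ^ 2 * φ x) → (∫ x in Qcube n, (φ x) ^ 2) = 1 →
          ∀ c : ℝ, 0 < c →
            μH[(n : ℝ) - 1] {x ∈ Qcube n | φ x = c} +
                μH[(n : ℝ) - 1] {x ∈ Qcube n | φ x = -c} ≥
              ENNReal.ofReal (C * lam ^ (((3 : ℝ) - (n : ℝ)) / 2) *
                ∫ x in {x ∈ Qcube n | c ≤ |φ x|}, |φ x|) := by
  obtain ⟨m, rfl⟩ : ∃ m, n = m + 1 := ⟨n - 1, by omega⟩
  obtain ⟨B, hB0, hB⟩ := exists_deriv_bound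
  set K : ℝ := (m + 1) * (4 * B * (6 * π) ^ (m + 1)) with hK
  have hK0 : 0 < K := by positivity
  refine ⟨1 / (K * √2), by positivity, fun lam hlam φ hφ pφ hlap hnorm c hc => ?_⟩
  have hG := grad_bound (by omega) hlam hφ pφ hlap hnorm
  have hG0 : 0 < √(2 * lam ^ (m + 1 + 1)) := by positivity
  have hpos := one_sided (by omega) hB0 hB hφ pφ hlap hG0 hG hc
  have hneg := one_sided (φ := fun x => -φ x) (by omega) hB0 hB hφ.neg
    (fun x k => congrArg Neg.neg (pφ x k)) (fun x => by rw [lap_neg, hlap]; ring) hG0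
    (fun x i => by rw [fderiv_fun_neg, neg_apply, abs_neg]; exact hG x i) hc
  rw [← hK, constant_eq hlam] at hpos hneg
  have hset : {x ∈ Qcube (m + 1) | -φ x = c} = {x ∈ Qcube (m + 1) | φ x = -c} := by
    simp only [neg_eq_iff_eq_neg]
  rw [hset] at hneg
  rw [ge_iff_le, integral_abs_split hφ.continuous hc, mul_add]
  exact ENNReal.ofReal_add_le.trans (add_le_add hpos hneg)
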